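/- Let f be the sequence A6519. For every real γ with 0 ≤ γ < 1, ∑_{k=1}^∞ γ^k · f(k) ≤ (1/(1 − γ)) · (1/e + 1/ln 2 + (1/2)·log₂(ln 16) + (1/2)·log₂(1/(1 − γ))). -/

import Mathlib

/-!
Write `f = A6519` and `R(x) = ∑ₖ xᵏ (f(k) - 1)`. Since `f = 1` on odd numbers and `f(2k) = 2 f(k)`,
`R(x) = x²/(1 - x²) + 2 R(x²)`. Unfolding this at `γ` produces terms `c · x²/(1 - x²)` with
`x = γ ^ 2ʲ` and, after multiplication by `1 - γ`, weight `c = (1 - γ) 2ʲ`. The invariant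
`2 c x ≤ 1 - x²`, preserved under `(x, c) ↦ (x², 2c)`, bounds such a term by `x / 2`. Finally
`x ≤ log₂ (1 + x) = log₂ (1/(1 - x)) - log₂ (1/(1 - x²))` makes the bounds telescope, so that
`(1 - γ) R(γ) ≤ ½ log₂ (1/(1 - γ))` (`mul_excess_le`). Adding the geometric series gives
`∑ₖ γᵏ f(k) ≤ (1/(1 - γ)) (γ + ½ log₂ (1/(1 - γ)))`, and the constant in the theorem exceeds `1`
because `1 / ln 2 ≥ 1`.
-/

/-- The sequence A6519: `f n` is the largest power of 2 dividing `n` (for `n ≥ 1`);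
equivalently `f n = 1` if `n` is odd and `f n = 2 · f (n/2)` if `n` is even. -/
def A6519 (n : ℕ) : ℕ := 2 ^ (padicValNat 2 n)

lemma A6519_odd (i : ℕ) : A6519 (2 * i + 1) = 1 := by
  have h : padicValNat 2 (2 * i + 1) = 0 := padicValNat.eq_zero_of_not_dvd (by omega)
  simp [A6519, h]

lemma A6519_even (i : ℕ) : A6519 (2 * (i + 1)) = 2 * A6519 (i + 1) := by
  unfold A6519
  rw [padicValNat.mul (by norm_num) (by omega), padicValNat_self, pow_add, pow_one]

/-- The `N`-th partial sum of `∑_{k ≥ 1} xᵏ (f(k) - 1)`, where `f = A6519`. -/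
noncomputable def excess (N : ℕ) (x : ℝ) : ℝ :=
  ∑ k ∈ Finset.range N, x ^ (k + 1) * ((A6519 (k + 1) : ℝ) - 1)

lemma sum_range_pow_succ_le {x : ℝ} (h0 : 0 ≤ x) (h1 : x < 1) (N : ℕ) :
    ∑ k ∈ Finset.range N, x ^ (k + 1) ≤ x / (1 - x) := by
  have h : ∑ k ∈ Finset.range N, x ^ (k + 1) = x * ∑ k ∈ Finset.range N, x ^ k := by
    rw [Finset.mul_sum]
    exact Finset.sum_congr rfl fun k _ => pow_succ' x k
  have h' := (summable_geometric_of_lt_one h0 h1).sum_le_tsum (Finset.range N)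
    (fun k _ => pow_nonneg h0 k)
  rw [tsum_geometric_of_lt_one h0 h1] at h'
  rw [h, div_eq_mul_inv]
  exact mul_le_mul_of_nonneg_left h' h0

/-- The functional equation of the series at the level of partial sums: only even indices
contribute. -/
lemma excess_two_mul (M : ℕ) (x : ℝ) :
    excess (2 * M) x = 2 * excess M (x ^ 2) + ∑ k ∈ Finset.range M, (x ^ 2) ^ (k + 1) := by
  induction M with
  | zero => simp [excess]
  | succ M ih =>
    unfold excess at ih ⊢
    rw [show 2 * (M + 1) = 2 * M + 1 + 1 by ring, Finset.sum_range_succ, Finset.sum_range_succ, ih,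
      Finset.sum_range_succ, Finset.sum_range_succ, A6519_odd,
      show 2 * M + 1 + 1 = 2 * (M + 1) by ring, A6519_even, ← pow_mul]
    push_cast
    ring

lemma le_logb_one_add {x : ℝ} (h0 : 0 ≤ x) (h1 : x ≤ 1) : x ≤ Real.logb 2 (1 + x) := by
  rw [Real.le_logb_iff_rpow_le (by norm_num) (by linarith)]
  have h := rpow_one_add_le_one_add_mul_self (s := 1) (by norm_num) h0 h1
  norm_num at h
  exact h

lemma logb_telescope {x : ℝ} (h0 : 0 ≤ x) (h1 : x < 1) :
    x + Real.logb 2 (1 / (1 - x ^ 2)) ≤ Real.logb 2 (1 / (1 - x)) := by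
  have h := le_logb_one_add h0 h1.le
  have h2 : 1 - x ^ 2 = (1 - x) * (1 + x) := by ring
  rw [one_div, one_div, Real.logb_inv, Real.logb_inv, h2,
    Real.logb_mul (by linarith) (by linarith)]
  linarith

/-- The key estimate, in the form that survives the substitution `(x, c) ↦ (x², 2c)`; it is used
with `c = 1 - x`. -/
lemma mul_excess_le (m : ℕ) : ∀ x c : ℝ, 0 ≤ x → x < 1 → 0 ≤ c → 2 * c * x ≤ 1 - x ^ 2 →
    c * excess (2 ^ m) x ≤ 1 / 2 * Real.logb 2 (1 / (1 - x)) := by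
  induction m with
  | zero =>
    intro x c h0 h1 _ _
    have h : 0 ≤ Real.logb 2 (1 / (1 - x)) := by
      apply Real.logb_nonneg (by norm_num)
      rw [le_div_iff₀ (by linarith)]
      linarith
    have h2 : excess (2 ^ 0) x = 0 := by simp [excess, A6519]
    rw [h2]
    linarith
  | succ m ih =>
    intro x c h0 h1 hc hcx
    have hx2 : x ^ 2 < 1 := by nlinarith
    have hpos : 0 < 1 - x ^ 2 := by linarith
    -- `2x ≤ 1 + x²` gives `4 c x² ≤ 2x (1 - x²) ≤ 1 - x⁴`.
    have hinv : 2 * (2 * c) * x ^ 2 ≤ 1 - (x ^ 2) ^ 2 := by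
      nlinarith [mul_le_mul_of_nonneg_left hcx h0, mul_nonneg hpos.le (sq_nonneg (1 - x))]
    have hrec := ih (x ^ 2) (2 * c) (sq_nonneg x) hx2 (by linarith) hinv
    have hgeom := mul_le_mul_of_nonneg_left
      (sum_range_pow_succ_le (sq_nonneg x) hx2 (2 ^ m)) hc
    have hterm : c * (x ^ 2 / (1 - x ^ 2)) ≤ x / 2 := by
      rw [← mul_div_assoc, div_le_iff₀ hpos]
      nlinarith [mul_le_mul_of_nonneg_left hcx h0]
    have htel := logb_telescope h0 h1
    rw [pow_succ' 2 m, excess_two_mul, mul_add]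
    linarith

/-- For `0 ≤ γ < 1`,
`∑_{k=1}^∞ γ^k · A6519 k ≤ (1/(1−γ)) · (1/e + 1/ln 2 + ½·log₂(ln 16) + ½·log₂(1/(1−γ)))`. -/
theorem A6519_generating_bound (γ : ℝ) (h0 : 0 ≤ γ) (h1 : γ < 1) :
    ∑' k : ℕ, γ ^ (k + 1) * (A6519 (k + 1) : ℝ) ≤
      (1 / (1 - γ)) *
        (1 / Real.exp 1 + 1 / Real.log 2 + (1 / 2) * Real.logb 2 (Real.log 16) +
          (1 / 2) * Real.logb 2 (1 / (1 - γ))) := by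
  have hpos : 0 < 1 - γ := by linarith
  have hlog2 : 0 < Real.log 2 := Real.log_pos (by norm_num)
  have hconst : 1 ≤ 1 / Real.exp 1 + 1 / Real.log 2 + (1 / 2) * Real.logb 2 (Real.log 16) := by
    have hA : 0 ≤ 1 / Real.exp 1 := by positivity
    have hB : 1 ≤ 1 / Real.log 2 := by
      rw [le_div_iff₀ hlog2]
      linarith [Real.log_two_lt_d9]
    have hC : 0 ≤ Real.logb 2 (Real.log 16) := by
      apply Real.logb_nonneg (by norm_num)
      rw [show (16 : ℝ) = 2 ^ 4 by norm_num, Real.log_pow]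
      push_cast
      linarith [Real.log_two_gt_d9]
    linarith
  have hnonneg : ∀ k : ℕ, 0 ≤ γ ^ (k + 1) * (A6519 (k + 1) : ℝ) := fun k => by positivity
  refine Real.tsum_le_of_sum_range_le hnonneg fun N => ?_
  -- The halving argument runs along lengths `2 ^ m`, and `N ≤ 2 ^ N`.
  refine (Finset.sum_le_sum_of_subset_of_nonneg
    (Finset.range_mono (Nat.lt_two_pow_self (n := N)).le) fun k _ _ => hnonneg k).trans ?_
  have hsplit : ∑ k ∈ Finset.range (2 ^ N), γ ^ (k + 1) * (A6519 (k + 1) : ℝ) =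
      excess (2 ^ N) γ + ∑ k ∈ Finset.range (2 ^ N), γ ^ (k + 1) := by
    unfold excess
    rw [← Finset.sum_add_distrib]
    exact Finset.sum_congr rfl fun k _ => by ring
  have hex := mul_excess_le N γ (1 - γ) h0 h1 hpos.le (by nlinarith [sq_nonneg (1 - γ)])
  have hgeom := sum_range_pow_succ_le h0 h1 (2 ^ N)
  rw [le_div_iff₀ hpos] at hgeom
  rw [hsplit, one_div_mul_eq_div, le_div_iff₀ hpos]
  linarith
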